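/- Let P be a set of 2n points in general position, n ≥ 2, and let 1 ≤ r ≤ n−1. Suppose each point of P is incident with exactly one halving line and exactly two k-halving lines for every k = 1, ..., r. Then the edges of the complete geometric graph on P can be partitioned into n plane spanning symmetric caterpillars that are pairwise isomorphic as abstract graphs. -/

import Mathlib

namespace Halving

/-- Signed side of `p` with respect to the oriented line through `u`, `v`. -/
def sideVal (u v p : ℝ × ℝ) : ℝ :=
  (v.1 - u.1) * (p.2 - u.2) - (v.2 - u.2) * (p.1 - u.1)

/-- General position: no three distinct points of `P` are collinear. -/
def GenPos (P : Finset (ℝ × ℝ)) : Prop :=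
  ∀ p ∈ P, ∀ q ∈ P, ∀ r ∈ P, p ≠ q → p ≠ r → q ≠ r →
    ¬ Collinear ℝ ({p, q, r} : Set (ℝ × ℝ))

/-- Points of `P` strictly on the negative side of the line through `u`, `v`. -/
noncomputable def negSide (P : Finset (ℝ × ℝ)) (u v : ℝ × ℝ) : Finset (ℝ × ℝ) :=
  P.filter (fun p => sideVal u v p < 0)

/-- Points of `P` strictly on the positive side of the line through `u`, `v`. -/
noncomputable def posSide (P : Finset (ℝ × ℝ)) (u v : ℝ × ℝ) : Finset (ℝ × ℝ) :=
  P.filter (fun p => 0 < sideVal u v p)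

/-- A `k`-halving line of a set `P` of `2m` points: a line through two points `u ≠ v` of `P`
splitting the remaining points into parts of sizes `m-1-k` and `m-1+k`.  `k = 0` is a
halving line. -/
def IsKHalving (P : Finset (ℝ × ℝ)) (m k : ℕ) (u v : ℝ × ℝ) : Prop :=
  u ∈ P ∧ v ∈ P ∧ u ≠ v ∧
  min (negSide P u v).card (posSide P u v).card = m - 1 - k ∧
  max (negSide P u v).card (posSide P u v).card = m - 1 + k

/-- A halving line. -/
abbrev IsHalving (P : Finset (ℝ × ℝ)) (m : ℕ) (u v : ℝ × ℝ) : Prop := IsKHalving P m 0 u v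

/-- Non-crossing geometric graph on points of the plane. -/
def NonCrossingG (G : SimpleGraph (ℝ × ℝ)) : Prop :=
  ∀ a b c d : ℝ × ℝ, G.Adj a b → G.Adj c d → s(a,b) ≠ s(c,d) →
    Disjoint (openSegment ℝ a b) (openSegment ℝ c d)

/-- A plane spanning tree of a finite point set `P`: all edges join points of `P`,
the graph induced on `P` is a tree, and no two edges cross. -/
def PlaneSpanningTreeOn (P : Finset (ℝ × ℝ)) (G : SimpleGraph (ℝ × ℝ)) : Prop :=
  (∀ a b, G.Adj a b → a ∈ P ∧ b ∈ P) ∧ (G.induce (↑P : Set (ℝ × ℝ))).IsTree ∧ NonCrossingG G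

/-- Partition of the edge set of the complete geometric graph on `P`. -/
def IsGeomPartition (P : Finset (ℝ × ℝ)) {n : ℕ} (T : Fin n → SimpleGraph (ℝ × ℝ)) : Prop :=
  ∀ a b : ℝ × ℝ, a ∈ P → b ∈ P → a ≠ b → ∃! i : Fin n, (T i).Adj a b

/-- The number of halving lines of `P` (as unordered pairs of points). -/
noncomputable def halvingCount (P : Finset (ℝ × ℝ)) (m : ℕ) : ℕ :=
  Set.ncard {e : Sym2 (ℝ × ℝ) | ∃ u v, e = s(u,v) ∧ IsHalving P m u v}

/-- An `h`-labeling: a bijective labeling `v_0, …, v_{2n-1}` of `P` such that for every `i`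
the line through `v_i` and `v_{i+n}` is a halving line. -/
def IsHLabeling (P : Finset (ℝ × ℝ)) (n : ℕ) (v : Fin (2*n) → ℝ × ℝ) : Prop :=
  Function.Injective v ∧ Set.range v = (↑P : Set (ℝ × ℝ)) ∧
  ∀ i : Fin (2*n), IsHalving P n (v i) (v (i + ⟨n % (2*n), Nat.mod_lt _ i.pos⟩))

/-- Convex position: every point of `P` is outside the convex hull of the others. -/
def ConvexPos (P : Finset (ℝ × ℝ)) : Prop :=
  ∀ p ∈ P, p ∉ convexHull ℝ (↑(P.erase p) : Set (ℝ × ℝ))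

end Halving
namespace GraphDefs

/-- Degree of a vertex, via `Set.ncard` (no decidability assumptions). -/
noncomputable def gdeg {V : Type*} (G : SimpleGraph V) (v : V) : ℕ := (G.neighborSet v).ncard

/-- A caterpillar: a tree having a path which contains all vertices of degree `≥ 2`
(equivalently, removing all leaves yields a path). -/
def IsCaterpillar {V : Type*} (G : SimpleGraph V) : Prop :=
  G.IsTree ∧ ∃ (u v : V) (p : G.Walk u v), p.IsPath ∧ ∀ w, 2 ≤ gdeg G w → w ∈ p.support

/-- The graph obtained from `T` by deleting the edges of the path `u1 u2 u3 u4`. -/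
def delP4 {V : Type*} (T : SimpleGraph V) (u1 u2 u3 u4 : V) : SimpleGraph V :=
  T.deleteEdges {s(u1,u2), s(u2,u3), s(u3,u4)}

/-- Witness for `P_4`-symmetry: in `T` minus the path edges, `u1` and `ua` are isolated,
the components of `u3` and `ub` are nontrivial, distinct, cover everything else, and there is
a graph isomorphism between them sending `u3` to `ub`. -/
def P4SymWitness {V : Type*} (T : SimpleGraph V) (u1 u2 u3 u4 ua ub : V) : Prop :=
  (∀ w, ¬ (delP4 T u1 u2 u3 u4).Adj u1 w) ∧
  (∀ w, ¬ (delP4 T u1 u2 u3 u4).Adj ua w) ∧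
  (∃ w, (delP4 T u1 u2 u3 u4).Adj u3 w) ∧
  (∃ w, (delP4 T u1 u2 u3 u4).Adj ub w) ∧
  (delP4 T u1 u2 u3 u4).connectedComponentMk u3 ≠ (delP4 T u1 u2 u3 u4).connectedComponentMk ub ∧
  (∀ v : V, v = u1 ∨ v = ua ∨
      v ∈ ((delP4 T u1 u2 u3 u4).connectedComponentMk u3).supp ∨
      v ∈ ((delP4 T u1 u2 u3 u4).connectedComponentMk ub).supp) ∧
  ∃ φ : ((delP4 T u1 u2 u3 u4).induce ((delP4 T u1 u2 u3 u4).connectedComponentMk u3).supp) ≃g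
        ((delP4 T u1 u2 u3 u4).induce ((delP4 T u1 u2 u3 u4).connectedComponentMk ub).supp),
    (φ ⟨u3, rfl⟩).1 = ub

/-- A `P_4`-symmetric tree, recording the 4-path: the case `i = 4` (Type-1) uses
isolated vertices `u1, u4` and components of `u3, u2`; the case `i = 2` (Type-2) uses
isolated vertices `u1, u2` and components of `u3, u4`. -/
def IsP4SymmetricVia {V : Type*} (T : SimpleGraph V) (u1 u2 u3 u4 : V) : Prop :=
  u1 ≠ u2 ∧ u1 ≠ u3 ∧ u1 ≠ u4 ∧ u2 ≠ u3 ∧ u2 ≠ u4 ∧ u3 ≠ u4 ∧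
  T.Adj u1 u2 ∧ T.Adj u2 u3 ∧ T.Adj u3 u4 ∧
  (P4SymWitness T u1 u2 u3 u4 u4 u2 ∨ P4SymWitness T u1 u2 u3 u4 u2 u4)

/-- A `w`-caterpillar: a `P_4`-symmetric tree `T` such that `T` or `T - u1` is a caterpillar. -/
def IsWCaterpillar {V : Type*} (T : SimpleGraph V) : Prop :=
  T.IsTree ∧ ∃ u1 u2 u3 u4 : V, IsP4SymmetricVia T u1 u2 u3 u4 ∧
    (IsCaterpillar T ∨ IsCaterpillar (T.induce {v | v ≠ u1}))

/-- A double star: a tree with two adjacent vertices `v, w` such that every other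
vertex is a leaf adjacent to `v` or `w`. -/
def IsDoubleStar {V : Type*} (G : SimpleGraph V) : Prop :=
  G.IsTree ∧ ∃ v w : V, v ≠ w ∧ G.Adj v w ∧
    ∀ u, u ≠ v → u ≠ w → gdeg G u = 1 ∧ (G.Adj v u ∨ G.Adj w u)

/-- A symmetric tree: an edge `vw` such that the two components of `T - vw` admit a
graph isomorphism mapping `v` to `w`. -/
def IsSymmetricTree {V : Type*} (T : SimpleGraph V) : Prop :=
  T.IsTree ∧ ∃ v w : V, T.Adj v w ∧
    ∃ φ : ((T.deleteEdges {s(v,w)}).induce ((T.deleteEdges {s(v,w)}).connectedComponentMk v).supp) ≃g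
          ((T.deleteEdges {s(v,w)}).induce ((T.deleteEdges {s(v,w)}).connectedComponentMk w).supp),
      (φ ⟨v, rfl⟩).1 = w

/-- `S_2(m, m)`: the double star `S(m,m)` with its central edge subdivided by two
degree-2 vertices: centers `v, w` of degree `m+1`, subdivision path `v c1 c2 w`,
and all other vertices are leaves adjacent to `v` or `w`. -/
def IsS2DoubleStar {V : Type*} (G : SimpleGraph V) (m : ℕ) : Prop :=
  G.IsTree ∧ ∃ v c1 c2 w : V,
    v ≠ c1 ∧ v ≠ c2 ∧ v ≠ w ∧ c1 ≠ c2 ∧ c1 ≠ w ∧ c2 ≠ w ∧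
    G.Adj v c1 ∧ G.Adj c1 c2 ∧ G.Adj c2 w ∧
    gdeg G v = m + 1 ∧ gdeg G w = m + 1 ∧ gdeg G c1 = 2 ∧ gdeg G c2 = 2 ∧
    ∀ u, u ≠ v → u ≠ c1 → u ≠ c2 → u ≠ w → gdeg G u = 1 ∧ (G.Adj v u ∨ G.Adj w u)

end GraphDefs

namespace Sol
open Halving GraphDefs

/-- Planar cross product. -/
def cr (d e : ℝ × ℝ) : ℝ := d.1 * e.2 - d.2 * e.1

/-- Points strictly to the right of the directed line through `p` with direction `d`. -/
noncomputable def rt (P : Finset (ℝ × ℝ)) (p d : ℝ × ℝ) : Finset (ℝ × ℝ) :=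
  P.filter (fun q => cr d (q - p) < 0)

lemma sideVal_eq (u v p : ℝ × ℝ) : sideVal u v p = cr (v - u) (p - u) := by
  simp [sideVal, cr]

lemma rt_neg (P : Finset (ℝ × ℝ)) (u v : ℝ × ℝ) : rt P u (v - u) = negSide P u v := by
  simp only [rt, negSide, sideVal_eq]

lemma sideVal_ne {P : Finset (ℝ × ℝ)} (hgp : GenPos P) {u v p : ℝ × ℝ} (hu : u ∈ P) (hv : v ∈ P)
    (hp : p ∈ P) (huv : u ≠ v) (hup : u ≠ p) (hvp : v ≠ p) : sideVal u v p ≠ 0 := by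
  intro h
  apply hgp u hu v hv p hp huv hup hvp
  rw [collinear_iff_of_mem (p₀ := u) (by simp)]
  refine ⟨v - u, ?_⟩
  intro x hx
  simp only [Set.mem_insert_iff, Set.mem_singleton_iff] at hx
  rcases hx with rfl | rfl | rfl
  · exact ⟨0, by simp⟩
  · exact ⟨1, by simp⟩
  · simp only [sideVal] at h
    by_cases h1 : v.1 - u.1 = 0
    · have h2 : v.2 - u.2 ≠ 0 := fun h2 => huv (Prod.ext (by linarith) (by linarith))
      refine ⟨(x.2 - u.2) / (v.2 - u.2), ?_⟩
      rw [h1] at h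
      have : x.1 - u.1 = 0 := by
        have : (v.2 - u.2) * (x.1 - u.1) = 0 := by linarith
        exact (mul_eq_zero.1 this).resolve_left h2
      ext
      · simp [h1]; linarith
      · simp; field_simp; ring
    · refine ⟨(x.1 - u.1) / (v.1 - u.1), ?_⟩
      ext
      · simp; field_simp; ring
      · simp; field_simp; linarith

lemma sideVal_left (u v : ℝ × ℝ) : sideVal u v u = 0 := by simp [sideVal]
lemma sideVal_right (u v : ℝ × ℝ) : sideVal u v v = 0 := by simp only [sideVal]; ring
lemma sideVal_swap (u v p : ℝ × ℝ) : sideVal v u p = - sideVal u v p := by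
  simp only [sideVal]; ring

lemma card_sides {P : Finset (ℝ × ℝ)} (hgp : GenPos P) {u v : ℝ × ℝ} (hu : u ∈ P) (hv : v ∈ P)
    (huv : u ≠ v) : (negSide P u v).card + (posSide P u v).card + 2 = P.card := by
  classical
  have h1 : Disjoint (negSide P u v) (posSide P u v) := by
    rw [Finset.disjoint_left]
    intro x hx hy
    simp only [negSide, posSide, Finset.mem_filter] at hx hy
    linarith [hx.2, hy.2]
  have h2 : Disjoint (negSide P u v ∪ posSide P u v) {u, v} := by
    rw [Finset.disjoint_right]
    intro x hx hy
    simp only [negSide, posSide, Finset.mem_union, Finset.mem_filter, Finset.mem_insert,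
      Finset.mem_singleton] at hx hy
    rcases hx with rfl | rfl
    · rw [sideVal_left] at hy; simp at hy
    · rw [sideVal_right] at hy; simp at hy
  have h3 : (negSide P u v ∪ posSide P u v) ∪ {u, v} = P := by
    ext x
    simp only [negSide, posSide, Finset.mem_union, Finset.mem_filter, Finset.mem_insert,
      Finset.mem_singleton]
    constructor
    · rintro ((h | h) | rfl | rfl)
      · exact h.1
      · exact h.1
      · exact hu
      · exact hv
    · intro hx
      by_cases hxu : u = x
      · subst hxu; simp
      by_cases hxv : v = x
      · subst hxv; simp
      rcases lt_or_gt_of_ne (sideVal_ne hgp hu hv hx huv hxu hxv) with h | h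
      · exact Or.inl (Or.inl ⟨hx, h⟩)
      · exact Or.inl (Or.inr ⟨hx, h⟩)
  conv_rhs => rw [← h3]
  rw [Finset.card_union_of_disjoint h2, Finset.card_union_of_disjoint h1, Finset.card_pair huv]

lemma halving_iff {P : Finset (ℝ × ℝ)} {n : ℕ} {u v : ℝ × ℝ} : IsHalving P n u v ↔
    u ∈ P ∧ v ∈ P ∧ u ≠ v ∧ (negSide P u v).card = n - 1 ∧ (posSide P u v).card = n - 1 := by
  simp only [IsHalving, IsKHalving]
  constructor
  · rintro ⟨a, b, c, d, e⟩; refine ⟨a, b, c, ?_, ?_⟩ <;> omega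
  · rintro ⟨a, b, c, d, e⟩; refine ⟨a, b, c, ?_, ?_⟩ <;> omega

lemma neg_swap (P : Finset (ℝ × ℝ)) (u v : ℝ × ℝ) : negSide P v u = posSide P u v := by
  simp only [negSide, posSide, sideVal_swap u v]
  apply Finset.filter_congr; intro x _; constructor <;> intro h <;> linarith

lemma pos_swap (P : Finset (ℝ × ℝ)) (u v : ℝ × ℝ) : posSide P v u = negSide P u v := by
  rw [neg_swap P v u]

lemma halving_symm {P : Finset (ℝ × ℝ)} {n : ℕ} {u v : ℝ × ℝ} (h : IsHalving P n u v) :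
    IsHalving P n v u := by
  rw [halving_iff] at *
  obtain ⟨a, b, c, d, e⟩ := h
  exact ⟨b, a, c.symm, by rw [neg_swap]; exact e, by rw [pos_swap]; exact d⟩

lemma rt_smul_pos (P : Finset (ℝ × ℝ)) (u q : ℝ × ℝ) {s : ℝ} (hs : 0 < s) :
    rt P u (s • (q - u)) = negSide P u q := by
  rw [← rt_neg]
  apply Finset.filter_congr; intro x _
  have : cr (s • (q - u)) (x - u) = s * cr (q - u) (x - u) := by simp [cr]; ring
  rw [this]
  constructor
  · intro h; by_contra h'; push Not at h'; nlinarith [mul_nonneg hs.le h']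
  · intro h; exact mul_neg_of_pos_of_neg hs h

lemma rt_smul_neg (P : Finset (ℝ × ℝ)) (u q : ℝ × ℝ) {s : ℝ} (hs : s < 0) :
    rt P u (s • (q - u)) = posSide P u q := by
  simp only [rt, posSide, sideVal_eq]
  apply Finset.filter_congr; intro x _
  have : cr (s • (q - u)) (x - u) = s * cr (q - u) (x - u) := by simp [cr]; ring
  rw [this]
  constructor
  · intro h; by_contra h'; push Not at h'; nlinarith [mul_nonneg_of_nonpos_of_nonpos hs.le h']
  · intro h; exact mul_neg_of_neg_of_pos hs h

lemma plk (d e f x : ℝ × ℝ) : cr d e * cr x f = cr d x * cr e f + cr d f * cr x e := by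
  simp only [cr]; ring

lemma wedge1 {d e f x : ℝ × ℝ} (h1 : 0 < cr d e) (h2 : 0 < cr e f) (h3 : 0 < cr d f)
    (h : 0 < cr d x * cr x e) : 0 < cr d x * cr x f := by
  have := plk d e f x
  rcases pos_and_pos_or_neg_and_neg_of_mul_pos h with ⟨a, b⟩ | ⟨a, b⟩
  · have : 0 < cr d e * cr x f := by rw [this]; positivity
    exact mul_pos a ((mul_pos_iff_of_pos_left h1).1 this)
  · have : cr d e * cr x f < 0 := by
      rw [this]; nlinarith [mul_neg_of_neg_of_pos a h2, mul_neg_of_pos_of_neg h3 b]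
    exact mul_pos_of_neg_of_neg a (by by_contra h'; push Not at h'; nlinarith [mul_nonneg h1.le h'])

lemma wedge2 {d e f x : ℝ × ℝ} (h1 : 0 < cr d e) (h2 : 0 < cr e f) (h3 : 0 < cr d f)
    (h : 0 < cr e x * cr x f) : 0 < cr d x * cr x f := by
  have := plk d e f x
  have hs : cr x e = - cr e x := by simp only [cr]; ring
  rw [hs] at this
  rcases pos_and_pos_or_neg_and_neg_of_mul_pos h with ⟨a, b⟩ | ⟨a, b⟩
  · have : 0 < cr d x * cr e f := by nlinarith [mul_pos h1 b, mul_pos h3 a]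
    exact mul_pos ((mul_pos_iff_of_pos_right h2).1 this) b
  · have : cr d x * cr e f < 0 := by
      nlinarith [mul_neg_of_pos_of_neg h1 b, mul_neg_of_pos_of_neg h3 a]
    exact mul_pos_of_neg_of_neg (by by_contra h'; push Not at h'; nlinarith [mul_nonneg h' h2.le]) b

/-- Bisection form of the rotation argument. -/
lemma rot {P : Finset (ℝ × ℝ)} {n : ℕ} (hn : 2 ≤ n) (hgp : GenPos P) (hcard : P.card = 2 * n)
    {p : ℝ × ℝ} (hp : p ∈ P) :
    ∀ (N : ℕ) (d : ℝ × ℝ) (q0 : ℝ × ℝ) (s : ℝ), q0 ∈ P → q0 ≠ p → s ≠ 0 →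
      0 < cr d (s • (q0 - p)) → n ≤ (rt P p d).card →
      ((rt P p (s • (q0 - p))).card + 2 ≤ n ∨ ((rt P p (s • (q0 - p))).card + 1 ≤ n ∧ 0 < s)) →
      (∀ x, IsHalving P n p x → ¬ 0 < cr d (x - p) * cr (x - p) (s • (q0 - p))) →
      (P.filter (fun q => 0 < cr d (q - p) * cr (q - p) (s • (q0 - p)))).card ≤ N → False := by
  classical
  intro N
  induction N with
  | zero =>
    intro d q0 s hq0 hqp hs hd hr hr' _ hW
    rw [Nat.le_zero, Finset.card_eq_zero] at hW
    have key : ∀ x ∈ rt P p d, x ∈ rt P p (s • (q0 - p)) ∨ x = q0 := by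
      intro x hx
      simp only [rt, Finset.mem_filter] at hx ⊢
      obtain ⟨hxP, hx⟩ := hx
      by_contra hc
      push Not at hc
      have hxp : x ≠ p := by rintro rfl; simp [cr] at hx
      have hnw : x ∉ P.filter (fun q => 0 < cr d (q - p) * cr (q - p) (s • (q0 - p))) := by
        rw [hW]; simp
      simp only [Finset.mem_filter, not_and] at hnw
      have h0 := hc.1 hxP
      have e1 : cr (x - p) (s • (q0 - p)) = - cr (s • (q0 - p)) (x - p) := by
        simp only [cr]; ring
      have e2 : cr (s • (q0 - p)) (x - p) = s * sideVal p q0 x := by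
        simp [cr, sideVal]; ring
      have h1 : sideVal p q0 x ≠ 0 :=
        sideVal_ne hgp hp hq0 hxP hqp.symm hxp.symm (Ne.symm hc.2)
      have h2 : 0 < cr (s • (q0 - p)) (x - p) := lt_of_le_of_ne h0 (by
        rw [e2]; exact (mul_ne_zero hs h1).symm)
      apply hnw hxP
      rw [e1]
      exact mul_pos_of_neg_of_neg hx (by linarith)
    rcases hr' with h | ⟨h, hs0⟩
    · have : rt P p d ⊆ insert q0 (rt P p (s • (q0 - p))) := by
        intro x hx
        rw [Finset.mem_insert]
        exact (key x hx).symm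
      have := Finset.card_le_card this
      have := Finset.card_insert_le q0 (rt P p (s • (q0 - p)))
      omega
    · have : rt P p d ⊆ rt P p (s • (q0 - p)) := by
        intro x hx
        rcases key x hx with h | rfl
        · exact h
        · exfalso
          simp only [rt, Finset.mem_filter] at hx
          have : cr d (s • (x - p)) = s * cr d (x - p) := by simp [cr]; ring
          rw [this] at hd
          nlinarith [mul_neg_of_pos_of_neg hs0 hx.2]
      have := Finset.card_le_card this
      omega
  | succ N ih =>
    intro d q0 s hq0 hqp hs hd hr hr' hh hW
    rcases Finset.eq_empty_or_nonempty
      (P.filter (fun q => 0 < cr d (q - p) * cr (q - p) (s • (q0 - p)))) with h0 | ⟨q, hq⟩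
    · exact ih d q0 s hq0 hqp hs hd hr hr' hh (by rw [h0]; simp)
    have hq' := hq
    rw [Finset.mem_filter] at hq
    obtain ⟨hqP, hq⟩ := hq
    have hqp' : q ≠ p := by rintro rfl; simp [cr] at hq
    have hnh : ¬ IsHalving P n p q := fun h => hh q h hq
    obtain ⟨t, ht, hde, hef⟩ : ∃ t : ℝ, t ≠ 0 ∧ 0 < cr d (t • (q - p)) ∧
        0 < cr (t • (q - p)) (s • (q0 - p)) := by
      rcases pos_and_pos_or_neg_and_neg_of_mul_pos hq with ⟨a, b⟩ | ⟨a, b⟩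
      · exact ⟨1, one_ne_zero, by simpa using a, by simpa using b⟩
      · refine ⟨-1, by norm_num, ?_, ?_⟩
        · have : cr d ((-1 : ℝ) • (q - p)) = - cr d (q - p) := by simp [cr]; ring
          linarith
        · have : cr ((-1 : ℝ) • (q - p)) (s • (q0 - p)) = - cr (q - p) (s • (q0 - p)) := by
            simp [cr]; ring
          linarith
    by_cases hre : n ≤ (rt P p (t • (q - p))).card
    · refine ih (t • (q - p)) q0 s hq0 hqp hs hef hre hr'
        (fun x hx h => hh x hx (wedge2 hde hef hd h)) ?_
      refine Nat.lt_succ_iff.1 (lt_of_lt_of_le (Finset.card_lt_card ?_) hW)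
      rw [Finset.ssubset_iff_of_subset]
      · refine ⟨q, hq', ?_⟩
        rw [Finset.mem_filter]
        rintro ⟨-, h⟩
        have : cr (t • (q - p)) (q - p) = 0 := by simp [cr]; ring
        rw [this] at h; simp at h
      · intro x hx
        rw [Finset.mem_filter] at hx ⊢
        exact ⟨hx.1, wedge2 hde hef hd hx.2⟩
    · refine ih d q t hqP hqp' ht hde hr (Or.inl ?_)
        (fun x hx h => hh x hx (wedge1 hde hef hd h)) ?_
      · have hne : (rt P p (t • (q - p))).card ≠ n - 1 := by
          intro he
          apply hnh
          rw [halving_iff]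
          have hc := card_sides hgp hp hqP hqp'.symm
          rcases lt_or_gt_of_ne ht with h | h
          · rw [rt_smul_neg _ _ _ h] at he
            exact ⟨hp, hqP, hqp'.symm, by omega, by omega⟩
          · rw [rt_smul_pos _ _ _ h] at he
            exact ⟨hp, hqP, hqp'.symm, by omega, by omega⟩
        omega
      refine Nat.lt_succ_iff.1 (lt_of_lt_of_le (Finset.card_lt_card ?_) hW)
      rw [Finset.ssubset_iff_of_subset]
      · refine ⟨q, hq', ?_⟩
        rw [Finset.mem_filter]
        rintro ⟨-, h⟩
        have : cr (q - p) (t • (q - p)) = 0 := by simp [cr]; ring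
        rw [this] at h; simp at h
      · intro x hx
        rw [Finset.mem_filter] at hx ⊢
        exact ⟨hx.1, wedge1 hde hef hd hx.2⟩

/-- If the unique halving partner of `p` is strictly left of `d`, then at most `n-1` points are
strictly right. -/
lemma rt_lt {P : Finset (ℝ × ℝ)} {n : ℕ} (hn : 2 ≤ n) (hgp : GenPos P) (hcard : P.card = 2 * n)
    {p p' : ℝ × ℝ} (hh : IsHalving P n p p') (hu : ∀ q, IsHalving P n p q → q = p')
    {d : ℝ × ℝ} (hd : 0 < cr d (p' - p)) : (rt P p d).card < n := by
  by_contra hc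
  push Not at hc
  have h := halving_iff.1 hh
  refine rot hn hgp hcard h.1 _ d p' 1 h.2.1 h.2.2.1.symm one_ne_zero (by simpa using hd) hc
    (Or.inr ⟨?_, one_pos⟩) ?_ le_rfl
  · rw [rt_smul_pos _ _ _ one_pos, h.2.2.2.1]; omega
  · intro x hx
    rw [hu x hx]
    simp [cr]
    apply le_of_eq; ring

/-- Two points on the left of a halving line cannot be matched. -/
lemma not_same {P : Finset (ℝ × ℝ)} {n : ℕ} (hn : 2 ≤ n) (hgp : GenPos P) (hcard : P.card = 2 * n)
    {a a' b b' : ℝ × ℝ} (ha : IsHalving P n a a') (hb : IsHalving P n b b')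
    (hub : ∀ q, IsHalving P n b q → q = b')
    (hle : 0 ≤ cr (a' - a) (b' - b))
    (h : 0 < sideVal a a' b) : False := by
  classical
  have hA := halving_iff.1 ha
  have hB := halving_iff.1 hb
  have hsub : insert a (insert a' (negSide P a a')) ⊆ rt P b (a' - a) := by
    intro x hx
    have hxx : x ∈ P ∧ sideVal a a' x ≤ 0 := by
      simp only [negSide, Finset.mem_insert, Finset.mem_filter] at hx
      rcases hx with rfl | rfl | hx
      · exact ⟨hA.1, by rw [sideVal_left]⟩
      · exact ⟨hA.2.1, by rw [sideVal_right]⟩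
      · exact ⟨hx.1, hx.2.le⟩
    simp only [rt, Finset.mem_filter]
    refine ⟨hxx.1, ?_⟩
    have : cr (a' - a) (x - b) = sideVal a a' x - sideVal a a' b := by
      simp [cr, sideVal]; ring
    rw [this]; linarith [hxx.2]
  have hc := Finset.card_le_card hsub
  rw [Finset.card_insert_of_notMem, Finset.card_insert_of_notMem, hA.2.2.2.1] at hc
  rotate_left
  · simp [negSide, sideVal_right]
  · simp [negSide, sideVal_left, hA.2.2.1]
  rcases hle.lt_or_eq with h0 | h0
  · have := rt_lt hn hgp hcard hb hub h0
    omega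
  · -- parallel
    obtain ⟨s, hs, he⟩ : ∃ s : ℝ, s ≠ 0 ∧ a' - a = s • (b' - b) := by
      simp only [cr] at h0
      have hb0 : b' - b ≠ 0 := sub_ne_zero.2 hB.2.2.1.symm
      have ha0 : a' - a ≠ 0 := sub_ne_zero.2 hA.2.2.1.symm
      by_cases h1 : (b' - b).1 = 0
      · have h2 : (b' - b).2 ≠ 0 := fun h2 => hb0 (Prod.ext h1 h2)
        rw [h1] at h0
        have h3 : (a' - a).1 = 0 :=
          (mul_eq_zero.1 (show (a' - a).1 * (b' - b).2 = 0 by linarith)).resolve_right h2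
        have h4 : (a' - a).2 ≠ 0 := fun h4 => ha0 (Prod.ext h3 h4)
        refine ⟨(a' - a).2 / (b' - b).2, div_ne_zero h4 h2, ?_⟩
        apply Prod.ext
        · rw [Prod.smul_fst, h1, h3]; simp
        · rw [Prod.smul_snd, smul_eq_mul]; field_simp
      · have h4 : (a' - a).1 ≠ 0 := fun h4 => by
          rw [h4] at h0
          exact ha0 (Prod.ext h4
            ((mul_eq_zero.1 (show (a' - a).2 * (b' - b).1 = 0 by linarith)).resolve_right h1))
        refine ⟨(a' - a).1 / (b' - b).1, div_ne_zero h4 h1, ?_⟩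
        apply Prod.ext
        · rw [Prod.smul_fst, smul_eq_mul]; field_simp
        · rw [Prod.smul_snd, smul_eq_mul]; field_simp; linarith
    rw [he] at hc
    rcases lt_or_gt_of_ne hs with h | h
    · rw [rt_smul_neg _ _ _ h, hB.2.2.2.2] at hc; omega
    · rw [rt_smul_pos _ _ _ h, hB.2.2.2.1] at hc; omega

lemma straddle {P : Finset (ℝ × ℝ)} {n : ℕ} (hn : 2 ≤ n) (hgp : GenPos P) (hcard : P.card = 2 * n)
    {a a' b b' : ℝ × ℝ} (ha : IsHalving P n a a') (hb : IsHalving P n b b')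
    (hub : ∀ q, IsHalving P n b q → q = b') (hub' : ∀ q, IsHalving P n b' q → q = b)
    (h1 : 0 < sideVal a a' b) (h2 : 0 < sideVal a a' b') : False := by
  rcases le_total 0 (cr (a' - a) (b' - b)) with h | h
  · exact not_same hn hgp hcard ha hb hub h h1
  · refine not_same hn hgp hcard ha (halving_symm hb) hub' ?_ h2
    have : cr (a' - a) (b - b') = - cr (a' - a) (b' - b) := by simp [cr]; ring
    linarith

/-- The partition property. -/
lemma exactly_one {P : Finset (ℝ × ℝ)} {n : ℕ} (hn : 2 ≤ n) (hgp : GenPos P)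
    (hcard : P.card = 2 * n) {f : ℝ × ℝ → ℝ × ℝ} (hf : ∀ p ∈ P, IsHalving P n p (f p))
    (hu : ∀ p ∈ P, ∀ q, IsHalving P n p q → q = f p) {a b : ℝ × ℝ} (ha : a ∈ P) (hb : b ∈ P)
    (hab : a ≠ b) (hne : b ≠ f a) : 0 < sideVal a (f a) b ↔ ¬ 0 < sideVal b (f b) a := by
  have hA := halving_iff.1 (hf a ha)
  have hB := halving_iff.1 (hf b hb)
  have hffa : f (f a) = a := (hu _ hA.2.1 _ (halving_symm (hf a ha))).symm
  have hffb : f (f b) = b := (hu _ hB.2.1 _ (halving_symm (hf b hb))).symm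
  have hne2 : a ≠ f b := by rintro rfl; exact hne hffb.symm
  have hne3 : f a ≠ f b := fun h => hab (by rw [← hffa, h, hffb])
  have c1 := sideVal_ne hgp hA.1 hA.2.1 hB.1 hA.2.2.1 hab hne.symm
  have c2 := sideVal_ne hgp hA.1 hA.2.1 hB.2.1 hA.2.2.1 hne2 hne3
  have c3 := sideVal_ne hgp hB.1 hB.2.1 hA.1 hB.2.2.1 hab.symm hne2.symm
  have c4 := sideVal_ne hgp hB.1 hB.2.1 hA.2.1 hB.2.2.1 hne hne3.symm
  have uA := hu a ha
  have uB := hu b hb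
  have uA' : ∀ q, IsHalving P n (f a) q → q = a := fun q h => by
    rw [hu _ hA.2.1 q h, hffa]
  have uB' : ∀ q, IsHalving P n (f b) q → q = b := fun q h => by
    rw [hu _ hB.2.1 q h, hffb]
  have s1 := straddle hn hgp hcard (hf a ha) (hf b hb) uB uB'
  have s2 := straddle hn hgp hcard (halving_symm (hf a ha)) (hf b hb) uB uB'
  have s3 := straddle hn hgp hcard (hf b hb) (hf a ha) uA uA'
  have s4 := straddle hn hgp hcard (halving_symm (hf b hb)) (hf a ha) uA uA'
  rw [sideVal_swap a (f a), sideVal_swap a (f a)] at s2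
  rw [sideVal_swap b (f b), sideVal_swap b (f b)] at s4
  have id : sideVal a (f a) b - sideVal a (f a) (f b) =
      -(sideVal b (f b) a - sideVal b (f b) (f a)) := by
    simp only [sideVal]; ring
  constructor
  · intro h h'
    have k1 : ¬ 0 < sideVal a (f a) (f b) := s1 h
    have k2 : ¬ 0 < sideVal b (f b) (f a) := s3 h'
    linarith
  · intro h
    by_contra h'
    have m1 : sideVal a (f a) b < 0 := lt_of_le_of_ne (not_lt.1 h') c1
    have m2 : sideVal b (f b) a < 0 := lt_of_le_of_ne (not_lt.1 h) c3
    have k1 : ¬ 0 < -sideVal a (f a) (f b) := s2 (by linarith)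
    have k2 : ¬ 0 < -sideVal b (f b) (f a) := s4 (by linarith)
    linarith

/-- The model balanced double star. -/
def DS (m : ℕ) : SimpleGraph (Bool × Option (Fin m)) where
  Adj x y := (x.2 = none ∧ y.2 = none ∧ x.1 ≠ y.1) ∨
    (x.1 = y.1 ∧ ((x.2 = none ∧ y.2 ≠ none) ∨ (x.2 ≠ none ∧ y.2 = none)))
  symm := ⟨fun x y h => by
    rcases h with ⟨a, b, c⟩ | ⟨a, b | b⟩
    · exact Or.inl ⟨b, a, c.symm⟩
    · exact Or.inr ⟨a.symm, Or.inr ⟨b.2, b.1⟩⟩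
    · exact Or.inr ⟨a.symm, Or.inl ⟨b.2, b.1⟩⟩⟩
  loopless := ⟨fun x h => by
    rcases h with ⟨a, b, c⟩ | ⟨a, b | b⟩
    · exact c rfl
    · exact b.2 b.1
    · exact b.1 b.2⟩

lemma DS_conn (m : ℕ) : (DS m).Connected := by
  rw [SimpleGraph.connected_iff_exists_forall_reachable]
  refine ⟨(false, none), ?_⟩
  have hc : ∀ b, (DS m).Reachable (false, none) (b, none) := by
    intro b
    cases b
    · exact SimpleGraph.Reachable.refl _
    · exact SimpleGraph.Adj.reachable (Or.inl ⟨rfl, rfl, by simp⟩)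
  rintro ⟨b, _ | j⟩
  · exact hc b
  · exact (hc b).trans (SimpleGraph.Adj.reachable (Or.inr ⟨rfl, Or.inl ⟨rfl, by simp⟩⟩))

lemma DS_tree (m : ℕ) : (DS m).IsTree := by
  classical
  rw [SimpleGraph.isTree_iff_connected_and_card]
  refine ⟨DS_conn m, ?_⟩
  have h1 := (DS_conn m).card_vert_le_card_edgeSet_add_one
  let par : Bool × Option (Fin m) → Bool × Option (Fin m) :=
    fun x => if x.2 = none then (false, none) else (x.1, none)
  have h2 : (DS m).edgeSet ⊆
      (fun x => s(x, par x)) '' {x : Bool × Option (Fin m) | x ≠ (false, none)} := by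
    intro e
    induction e with
    | h x y =>
      intro h
      rw [SimpleGraph.mem_edgeSet] at h
      obtain ⟨b, x⟩ := x
      obtain ⟨c, y⟩ := y
      rcases h with ⟨h1, h2, h3⟩ | ⟨h1, ⟨h2, h3⟩ | ⟨h2, h3⟩⟩
      · simp only at h1 h2 h3
        subst h1 h2
        cases b
        · cases c
          · exact absurd rfl h3
          · exact ⟨(true, none), by simp, by simp [par, Sym2.eq_swap]⟩
        · cases c
          · exact ⟨(true, none), by simp, by simp [par]⟩
          · exact absurd rfl h3
      · simp only at h1 h2 h3
        subst h1 h2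
        exact ⟨(b, y), by simp [h3], by simp [par, h3, Sym2.eq_swap]⟩
      · simp only at h1 h2 h3
        subst h1 h3
        exact ⟨(b, x), by simp [h2], by simp [par, h2]⟩
  have h3 : (DS m).edgeSet.ncard ≤ {x : Bool × Option (Fin m) | x ≠ (false, none)}.ncard :=
    (Set.ncard_le_ncard h2 (Set.toFinite _)).trans (Set.ncard_image_le (Set.toFinite _))
  have h4 : {x : Bool × Option (Fin m) | x ≠ (false, none)}.ncard + 1
      = Nat.card (Bool × Option (Fin m)) := by
    have := Set.ncard_add_ncard_compl ({(false, none)} : Set (Bool × Option (Fin m)))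
    rw [Set.ncard_singleton] at this
    rw [← this, add_comm]; rfl
  have h5 : Nat.card (DS m).edgeSet = (DS m).edgeSet.ncard := rfl
  omega

/-- The flip automorphism. -/
def flip (m : ℕ) : DS m ≃g DS m where
  toEquiv := Equiv.prodCongr (Equiv.boolNot) (Equiv.refl _)
  map_rel_iff' := by
    rintro ⟨b, x⟩ ⟨c, y⟩
    simp [DS]

lemma sym_of_aut {V : Type*} {G : SimpleGraph V} (ht : G.IsTree) (σ : G ≃g G) {v w : V}
    (hvw : G.Adj v w) (h1 : σ v = w) (h2 : σ w = v) : IsSymmetricTree G := by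
  refine ⟨ht, v, w, hvw, ?_⟩
  have hadj : ∀ x y, (G.deleteEdges {s(v,w)}).Adj (σ x) (σ y) ↔ (G.deleteEdges {s(v,w)}).Adj x y := by
    intro x y
    simp only [SimpleGraph.deleteEdges_adj, Set.mem_singleton_iff, SimpleGraph.Iso.map_adj_iff]
    have : s(σ x, σ y) = s(v, w) ↔ s(x, y) = s(v, w) := by
      have e : s(v, w) = s(σ w, σ v) := by rw [h1, h2]
      rw [e, Sym2.eq_swap (a := σ w)]
      simp only [Sym2.eq_iff, σ.injective.eq_iff]
      rw [h1, h2]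
      tauto
    rw [this]
  let τ : G.deleteEdges {s(v,w)} ≃g G.deleteEdges {s(v,w)} :=
    { toEquiv := σ.toEquiv, map_rel_iff' := fun {x y} => hadj x y }
  have hτ : ∀ x, τ x = σ x := fun _ => rfl
  have hs : ∀ x, x ∈ ((G.deleteEdges {s(v,w)}).connectedComponentMk v).supp ↔
      τ x ∈ ((G.deleteEdges {s(v,w)}).connectedComponentMk w).supp := by
    intro x
    simp only [SimpleGraph.ConnectedComponent.mem_supp_iff, SimpleGraph.ConnectedComponent.eq]
    have h := SimpleGraph.Iso.reachable_iff (φ := τ) (u := x) (v := v)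
    rw [hτ v, h1] at h
    exact h.symm
  refine ⟨{ toEquiv := Equiv.subtypeEquiv τ.toEquiv hs, map_rel_iff' := ?_ }, ?_⟩
  · rintro ⟨x, hx⟩ ⟨y, hy⟩
    exact hadj x y
  · exact h1

lemma cat_of_iso {V : Type*} {m : ℕ} {G : SimpleGraph V} (e : DS m ≃g G) : IsCaterpillar G := by
  refine ⟨e.isTree_iff.1 (DS_tree m), ?_⟩
  have hA : (DS m).Adj (false, none) (true, none) := Or.inl ⟨rfl, rfl, by simp⟩
  refine ⟨_, _, (SimpleGraph.Walk.cons (e.map_adj_iff.2 hA) SimpleGraph.Walk.nil), ?_, ?_⟩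
  · simp
  · intro w hw
    obtain ⟨⟨b, x⟩, rfl⟩ := e.surjective w
    rcases x with _ | j
    · cases b <;> simp
    · exfalso
      have : G.neighborSet (e (b, some j)) ⊆ {e (b, none)} := by
        intro y hy
        obtain ⟨⟨c, y⟩, rfl⟩ := e.surjective y
        rw [SimpleGraph.mem_neighborSet, e.map_adj_iff] at hy
        simp only [DS] at hy
        simp at hy
        simp [hy]
      have h := Set.ncard_le_ncard this (Set.finite_singleton _)
      rw [Set.ncard_singleton] at h
      simp only [gdeg] at hw
      omega

lemma sym_of_iso {V : Type*} {m : ℕ} {G : SimpleGraph V} (e : DS m ≃g G) : IsSymmetricTree G := by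
  have hA : (DS m).Adj (false, none) (true, none) := Or.inl ⟨rfl, rfl, by simp⟩
  refine sym_of_aut (e.isTree_iff.1 (DS_tree m)) ((e.symm.trans (flip m)).trans e)
    (e.map_adj_iff.2 hA) ?_ ?_
  · simp [flip]
  · simp [flip]

lemma sideVal_comb (u v a b : ℝ × ℝ) (s t : ℝ) (h : s + t = 1) :
    sideVal u v (s • a + t • b) = s * sideVal u v a + t * sideVal u v b := by
  have : s = 1 - t := by linarith
  subst this
  simp [sideVal]; ring

/-- The half of a double star at `x`. -/
def DD (P : Finset (ℝ × ℝ)) (f : ℝ × ℝ → ℝ × ℝ) (x y : ℝ × ℝ) : Prop :=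
  y ∈ P ∧ (y = f x ∨ 0 < sideVal x (f x) y)

/-- The double star of the halving edge at `a`. -/
def TT (P : Finset (ℝ × ℝ)) (f : ℝ × ℝ → ℝ × ℝ) (a : ℝ × ℝ) : SimpleGraph (ℝ × ℝ) where
  Adj x y := x ≠ y ∧ (((x = a ∨ x = f a) ∧ DD P f x y) ∨ ((y = a ∨ y = f a) ∧ DD P f y x))
  symm := ⟨fun x y h => ⟨h.1.symm, h.2.symm⟩⟩
  loopless := ⟨fun x h => h.1 rfl⟩

lemma nc_aux {P : Finset (ℝ × ℝ)} {f : ℝ × ℝ → ℝ × ℝ} (hgp : GenPos P) {a : ℝ × ℝ}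
    (ha : a ∈ P) (hfa : f a ∈ P) (hne : a ≠ f a) (hff : f (f a) = a)
    {x y x' y' : ℝ × ℝ} (hxy : x ≠ y) (hxy' : x' ≠ y')
    (hx : x = a ∨ x = f a) (hx' : x' = a ∨ x' = f a) (hy : DD P f x y) (hy' : DD P f x' y')
    (hs : s(x, y) ≠ s(x', y')) : Disjoint (openSegment ℝ x y) (openSegment ℝ x' y') := by
  have hfx : f x ∈ P ∧ x ∈ P ∧ f (f x) = x ∧ x ≠ f x := by
    rcases hx with rfl | rfl
    · exact ⟨hfa, ha, hff, hne⟩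
    · rw [hff]; exact ⟨ha, hfa, rfl, hne.symm⟩
  have hxx : x' = x ∨ x' = f x := by
    rcases hx with rfl | rfl <;> rcases hx' with rfl | rfl <;> simp [hff]
  rw [Set.disjoint_left]
  rintro z ⟨s, t, hs0, ht0, hst, rfl⟩ ⟨s', t', hs0', ht0', hst', he⟩
  rcases hxx with rfl | rfl
  · -- common centre
    have hyy : y ≠ y' := by rintro rfl; exact hs rfl
    have h1 := sideVal_ne hgp hfx.2.1 hy.1 hy'.1 hxy hxy' hyy
    have h2 := congrArg (sideVal x' y) he
    rw [sideVal_comb _ _ _ _ _ _ hst, sideVal_comb _ _ _ _ _ _ hst', sideVal_left,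
      sideVal_right] at h2
    simp at h2
    rcases h2 with h2 | h2
    · linarith
    · exact h1 h2
  · have h2 := congrArg (sideVal x (f x)) he
    rw [sideVal_comb _ _ _ _ _ _ hst, sideVal_comb _ _ _ _ _ _ hst', sideVal_left,
      sideVal_right] at h2
    simp only [mul_zero, zero_add] at h2
    have k := hy.2
    have k' := hy'.2
    rw [hfx.2.2.1, sideVal_swap] at k'
    rcases k with rfl | k
    · rcases k' with rfl | k'
      · exact hs Sym2.eq_swap
      · rw [sideVal_right] at h2
        nlinarith [mul_pos ht0' k']
    · rcases k' with rfl | k'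
      · rw [sideVal_left] at h2
        nlinarith [mul_pos ht0 k]
      · nlinarith [mul_pos ht0' k', mul_pos ht0 k]

lemma nc {P : Finset (ℝ × ℝ)} {f : ℝ × ℝ → ℝ × ℝ} (hgp : GenPos P) {a : ℝ × ℝ}
    (ha : a ∈ P) (hfa : f a ∈ P) (hne : a ≠ f a) (hff : f (f a) = a) :
    NonCrossingG (TT P f a) := by
  intro x y x' y' h h' hs
  obtain ⟨hxy, h⟩ := h
  obtain ⟨hxy', h'⟩ := h'
  rcases h with ⟨h1, h2⟩ | ⟨h1, h2⟩ <;> rcases h' with ⟨h1', h2'⟩ | ⟨h1', h2'⟩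
  · exact nc_aux hgp ha hfa hne hff hxy hxy' h1 h1' h2 h2' hs
  · rw [openSegment_symm ℝ x' y']
    exact nc_aux hgp ha hfa hne hff hxy hxy'.symm h1 h1' h2 h2' (by rwa [Sym2.eq_swap (a := y')])
  · rw [openSegment_symm ℝ x y]
    exact nc_aux hgp ha hfa hne hff hxy.symm hxy' h1 h1' h2 h2' (by rwa [Sym2.eq_swap (a := y)])
  · rw [openSegment_symm ℝ x y, openSegment_symm ℝ x' y']
    exact nc_aux hgp ha hfa hne hff hxy.symm hxy'.symm h1 h1' h2 h2'
      (by rwa [Sym2.eq_swap (a := y), Sym2.eq_swap (a := y')])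

set_option maxHeartbeats 2000000 in
lemma TT_iso {P : Finset (ℝ × ℝ)} {n : ℕ} (hn : 2 ≤ n) (hcard : P.card = 2 * n)
    {f : ℝ × ℝ → ℝ × ℝ} {a : ℝ × ℝ} (hff : f (f a) = a) (hh : IsHalving P n a (f a)) :
    Nonempty (DS (n - 1) ≃g (TT P f a).induce (↑P : Set (ℝ × ℝ))) := by
  classical
  obtain ⟨ha, hfa, hne, hc1, hc2⟩ := halving_iff.1 hh
  let eL := (Finset.equivFinOfCardEq hc2).symm
  let eR := (Finset.equivFinOfCardEq hc1).symm
  have hL : ∀ j, (eL j : ℝ × ℝ) ∈ P ∧ 0 < sideVal a (f a) (eL j) := fun j => by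
    have := (eL j).2
    simpa only [posSide, Finset.mem_filter] using this
  have hR : ∀ j, (eR j : ℝ × ℝ) ∈ P ∧ sideVal a (f a) (eR j) < 0 := fun j => by
    have := (eR j).2
    simpa only [negSide, Finset.mem_filter] using this
  let g : Bool × Option (Fin (n - 1)) → (↑P : Set (ℝ × ℝ)) := fun x =>
    match x with
    | (true, none) => ⟨a, ha⟩
    | (false, none) => ⟨f a, hfa⟩
    | (true, some j) => ⟨eL j, (hL j).1⟩
    | (false, some j) => ⟨eR j, (hR j).1⟩
  have La : ∀ j, (eL j : ℝ × ℝ) ≠ a := fun j h => by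
    have := (hL j).2; rw [h, sideVal_left] at this; exact lt_irrefl _ this
  have Lf : ∀ j, (eL j : ℝ × ℝ) ≠ f a := fun j h => by
    have := (hL j).2; rw [h, sideVal_right] at this; exact lt_irrefl _ this
  have Ra : ∀ j, (eR j : ℝ × ℝ) ≠ a := fun j h => by
    have := (hR j).2; rw [h, sideVal_left] at this; exact lt_irrefl _ this
  have Rf : ∀ j, (eR j : ℝ × ℝ) ≠ f a := fun j h => by
    have := (hR j).2; rw [h, sideVal_right] at this; exact lt_irrefl _ this
  have LR : ∀ i j, (eL i : ℝ × ℝ) ≠ eR j := fun i j h => by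
    have h1 := (hL i).2; have h2 := (hR j).2; rw [h] at h1; linarith
  have hg : Function.Injective g := by
    rintro ⟨b, x⟩ ⟨c, y⟩ h
    have h := congrArg Subtype.val h
    rcases b <;> rcases c <;> rcases x with _ | i <;> rcases y with _ | j <;> simp only [g] at h
    all_goals first
      | rfl
      | exact absurd h hne
      | exact absurd h.symm hne
      | exact absurd h (La _)
      | exact absurd h.symm (La _)
      | exact absurd h (Lf _)
      | exact absurd h.symm (Lf _)
      | exact absurd h (Ra _)
      | exact absurd h.symm (Ra _)
      | exact absurd h (Rf _)
      | exact absurd h.symm (Rf _)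
      | exact absurd h (LR _ _)
      | exact absurd h.symm (LR _ _)
      | (have h := eL.injective (Subtype.ext h); subst h; rfl)
      | (have h := eR.injective (Subtype.ext h); subst h; rfl)
  have hb : Function.Bijective g := by
    rw [Fintype.bijective_iff_injective_and_card]
    refine ⟨hg, ?_⟩
    simp [hcard]
    omega
  refine ⟨{ toEquiv := Equiv.ofBijective g hb, map_rel_iff' := ?_ }⟩
  have D1 : ∀ y, DD P f a y ↔ y ∈ P ∧ (y = f a ∨ 0 < sideVal a (f a) y) := fun _ => Iff.rfl
  have D2 : ∀ y, DD P f (f a) y ↔ y ∈ P ∧ (y = a ∨ sideVal a (f a) y < 0) := fun y => by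
    simp only [DD, hff, sideVal_swap a (f a)]; simp
  have nL : ∀ j, ¬ sideVal a (f a) (eL j) < 0 := fun j => not_lt.2 (hL j).2.le
  have nR : ∀ j, ¬ 0 < sideVal a (f a) (eR j) := fun j => not_lt.2 (hR j).2.le
  have pL : ∀ j, 0 < sideVal a (f a) (eL j) := fun j => (hL j).2
  have pR : ∀ j, sideVal a (f a) (eR j) < 0 := fun j => (hR j).2
  have mL : ∀ j, (eL j : ℝ × ℝ) ∈ P := fun j => (hL j).1
  have mR : ∀ j, (eR j : ℝ × ℝ) ∈ P := fun j => (hR j).1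
  have adj : ∀ x y, (TT P f a).Adj x y ↔ x ≠ y ∧ (((x = a ∧ DD P f a y) ∨ (x = f a ∧ DD P f (f a) y))
      ∨ ((y = a ∧ DD P f a x) ∨ (y = f a ∧ DD P f (f a) x))) := by
    intro x y
    simp only [TT]
    constructor
    · rintro ⟨h, ⟨rfl | rfl, k⟩ | ⟨rfl | rfl, k⟩⟩ <;> simp [h, k]
    · rintro ⟨h, (⟨rfl, k⟩ | ⟨rfl, k⟩) | (⟨rfl, k⟩ | ⟨rfl, k⟩)⟩ <;> simp [h, k]
  clear_value eL eR
  rintro ⟨b, x⟩ ⟨c, y⟩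
  simp only [Equiv.ofBijective_apply, SimpleGraph.comap_adj, Function.Embedding.subtype_apply, adj,
    D1, D2]
  rcases b <;> rcases c <;> rcases x with _ | i <;> rcases y with _ | j <;>
    simp [g, DS, hne, hne.symm, La, Lf, Ra, Rf, fun i => (La i).symm, fun i => (Lf i).symm,
      fun i => (Ra i).symm, fun i => (Rf i).symm, nL, nR, pL, pR, mL, mR, ha, hfa, sideVal_left,
      sideVal_right]

lemma index_exists {P : Finset (ℝ × ℝ)} {n : ℕ} (hcard : P.card = 2 * n)
    {f : ℝ × ℝ → ℝ × ℝ} (hfP : ∀ p ∈ P, f p ∈ P) (hne : ∀ p ∈ P, p ≠ f p)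
    (hff : ∀ p ∈ P, f (f p) = p) :
    ∃ v : Fin n → ℝ × ℝ, (∀ i, v i ∈ P) ∧ ∀ p ∈ P, ∃! i, p = v i ∨ p = f (v i) := by
  classical
  set A := P.filter (fun p => toLex p < toLex (f p)) with hA
  set B := P.filter (fun p => ¬ toLex p < toLex (f p)) with hB
  have h1 : A.card + B.card = P.card := Finset.card_filter_add_card_filter_not _
  have h2 : A.card = B.card := by
    refine Finset.card_bij (fun p _ => f p) ?_ ?_ ?_
    · intro p hp
      simp only [hA, hB, Finset.mem_filter] at hp ⊢
      rw [hff p hp.1]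
      exact ⟨hfP p hp.1, not_lt.2 hp.2.le⟩
    · intro p hp q hq h
      simp only [hA, Finset.mem_filter] at hp hq
      rw [← hff p hp.1, h, hff q hq.1]
    · intro p hp
      simp only [hB, Finset.mem_filter] at hp
      refine ⟨f p, ?_, hff p hp.1⟩
      simp only [hA, Finset.mem_filter]
      rw [hff p hp.1]
      refine ⟨hfP p hp.1, lt_of_le_of_ne (not_lt.1 hp.2) ?_⟩
      intro h
      exact hne p hp.1 (toLex.injective h).symm
  have h3 : A.card = n := by omega
  let e := (Finset.equivFinOfCardEq h3).symm
  have he : ∀ i, (e i : ℝ × ℝ) ∈ P ∧ toLex (e i : ℝ × ℝ) < toLex (f (e i)) := fun i => by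
    have := (e i).2
    simpa only [hA, Finset.mem_filter] using this
  refine ⟨fun i => e i, fun i => (he i).1, ?_⟩
  intro p hp
  by_cases hpA : p ∈ A
  · refine ⟨e.symm ⟨p, hpA⟩, by simp, ?_⟩
    intro j hj
    rcases hj with hj | hj
    · rw [Equiv.eq_symm_apply]; exact Subtype.ext hj.symm
    · exfalso
      have := (Finset.mem_filter.1 hpA).2
      rw [hj, hff _ (he j).1] at this
      exact lt_asymm this (he j).2
  · have hlt : ¬ toLex p < toLex (f p) := fun h => hpA (Finset.mem_filter.2 ⟨hp, h⟩)
    have hfA : f p ∈ A := by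
      refine Finset.mem_filter.2 ⟨hfP p hp, ?_⟩
      rw [hff p hp]
      exact lt_of_le_of_ne (not_lt.1 hlt) (fun h => hne p hp (toLex.injective h).symm)
    refine ⟨e.symm ⟨f p, hfA⟩, by simp [hff p hp], ?_⟩
    intro j hj
    rcases hj with hj | hj
    · exfalso
      apply hlt
      rw [hj]
      exact (he j).2
    · rw [Equiv.eq_symm_apply]
      apply Subtype.ext
      change (e j : ℝ × ℝ) = f p
      rw [hj, hff _ (he j).1]

lemma main {P : Finset (ℝ × ℝ)} {n : ℕ} (hn : 2 ≤ n) (hgp : GenPos P) (hcard : P.card = 2*n)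
    (hone : ∀ p ∈ P, Set.ncard {q : ℝ × ℝ | q ∈ P ∧ IsHalving P n p q} = 1) :
    ∃ 𝒯 : Fin n → SimpleGraph (ℝ × ℝ),
      IsGeomPartition P 𝒯 ∧
      (∀ i, PlaneSpanningTreeOn P (𝒯 i) ∧
        IsCaterpillar ((𝒯 i).induce (↑P : Set (ℝ × ℝ))) ∧
        IsSymmetricTree ((𝒯 i).induce (↑P : Set (ℝ × ℝ)))) ∧
      ∀ i j : Fin n,
        Nonempty (((𝒯 i).induce (↑P : Set (ℝ × ℝ))) ≃g ((𝒯 j).induce (↑P : Set (ℝ × ℝ)))) := by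
  classical
  have hex : ∀ p, ∃ q, p ∈ P → IsHalving P n p q ∧ ∀ q', IsHalving P n p q' → q' = q := by
    intro p
    by_cases hp : p ∈ P
    · obtain ⟨q, hq⟩ := Set.ncard_eq_one.1 (hone p hp)
      refine ⟨q, fun _ => ⟨?_, ?_⟩⟩
      · have : q ∈ {q : ℝ × ℝ | q ∈ P ∧ IsHalving P n p q} := by rw [hq]; rfl
        exact this.2
      · intro q' h'
        have : q' ∈ {q : ℝ × ℝ | q ∈ P ∧ IsHalving P n p q} := ⟨h'.2.1, h'⟩
        rw [hq] at this
        exact this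
    · exact ⟨p, fun h => absurd h hp⟩
  choose f hf' using hex
  have hf : ∀ p ∈ P, IsHalving P n p (f p) := fun p hp => (hf' p hp).1
  have hu : ∀ p ∈ P, ∀ q, IsHalving P n p q → q = f p := fun p hp => (hf' p hp).2
  have hfP : ∀ p ∈ P, f p ∈ P := fun p hp => (hf p hp).2.1
  have hne : ∀ p ∈ P, p ≠ f p := fun p hp => (hf p hp).2.2.1
  have hff : ∀ p ∈ P, f (f p) = p := fun p hp =>
    (hu _ (hfP p hp) _ (halving_symm (hf p hp))).symm
  obtain ⟨v, hvP, hv⟩ := index_exists hcard hfP hne hff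
  have hiso := fun i => TT_iso (P := P) hn hcard (hff _ (hvP i)) (hf _ (hvP i))
  refine ⟨fun i => TT P f (v i), ?_, ?_, ?_⟩
  · have hpart : ∀ a b, a ∈ P → b ∈ P → a ≠ b → DD P f a b → (DD P f b a → b = f a) →
        ∃! i : Fin n, (TT P f (v i)).Adj a b := by
      intro a b ha hb hab h1 h2
      obtain ⟨i, hi, hiu⟩ := hv a ha
      refine ⟨i, ⟨hab, Or.inl ⟨hi, h1⟩⟩, ?_⟩
      rintro j ⟨-, ⟨hj, -⟩ | ⟨hj, hd⟩⟩
      · exact hiu j hj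
      · apply hiu
        have hba := h2 hd
        subst hba
        rcases hj with hj | hj
        · right; rw [← hj, hff a ha]
        · left; rw [← hff a ha, hj, hff _ (hvP j)]
    intro a b ha hb hab
    by_cases hb' : b = f a
    · exact hpart a b ha hb hab ⟨hb, Or.inl hb'⟩ (fun _ => hb')
    have ha' : a ≠ f b := by rintro rfl; exact hb' (hff b hb).symm
    have hx := exactly_one hn hgp hcard hf hu ha hb hab hb'
    by_cases h : 0 < sideVal a (f a) b
    · refine hpart a b ha hb hab ⟨hb, Or.inr h⟩ ?_
      rintro ⟨-, h' | h'⟩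
      · exact absurd h' ha'
      · exact absurd h' (hx.1 h)
    · have h'' : 0 < sideVal b (f b) a := by
        by_contra hc; exact h (hx.2 hc)
      obtain ⟨i, hi, hiu⟩ := hpart b a hb ha hab.symm ⟨ha, Or.inr h''⟩ (by
        rintro ⟨-, h' | h'⟩
        · exact absurd h' hb'
        · exact absurd h' h)
      exact ⟨i, hi.symm, fun j hj => hiu j (SimpleGraph.Adj.symm hj)⟩
  · intro i
    obtain ⟨e⟩ := hiso i
    refine ⟨⟨?_, e.isTree_iff.1 (DS_tree _), nc hgp (hvP i) (hfP _ (hvP i)) (hne _ (hvP i))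
      (hff _ (hvP i))⟩, cat_of_iso e, sym_of_iso e⟩
    have hc : ∀ x, (x = v i ∨ x = f (v i)) → x ∈ P := by
      rintro x (rfl | rfl)
      · exact hvP i
      · exact hfP _ (hvP i)
    rintro a b ⟨-, ⟨h1, h2⟩ | ⟨h1, h2⟩⟩
    · exact ⟨hc a h1, h2.1⟩
    · exact ⟨h2.1, hc b h1⟩
  · intro i j
    obtain ⟨e⟩ := hiso i
    obtain ⟨e'⟩ := hiso j
    exact ⟨e.symm.trans e'⟩

end Sol

open Halving GraphDefs in
/-- If each point of a `2n`-point set `P` in general position lies on exactly one halving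
line and exactly two `k`-halving lines for each `k = 1, …, r`, then the complete geometric
graph on `P` can be partitioned into `n` plane spanning symmetric caterpillars that are
pairwise isomorphic. -/
theorem stmt14 (P : Finset (ℝ × ℝ)) (n r : ℕ) (hn : 2 ≤ n) (hr1 : 1 ≤ r) (hr2 : r ≤ n - 1)
    (hgp : GenPos P) (hcard : P.card = 2*n)
    (hone : ∀ p ∈ P, Set.ncard {q : ℝ × ℝ | q ∈ P ∧ IsHalving P n p q} = 1)
    (htwo : ∀ k : ℕ, 1 ≤ k → k ≤ r →
      ∀ p ∈ P, Set.ncard {q : ℝ × ℝ | q ∈ P ∧ IsKHalving P n k p q} = 2) :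
    ∃ 𝒯 : Fin n → SimpleGraph (ℝ × ℝ),
      IsGeomPartition P 𝒯 ∧
      (∀ i, PlaneSpanningTreeOn P (𝒯 i) ∧
        IsCaterpillar ((𝒯 i).induce (↑P : Set (ℝ × ℝ))) ∧
        IsSymmetricTree ((𝒯 i).induce (↑P : Set (ℝ × ℝ)))) ∧
      ∀ i j : Fin n,
        Nonempty (((𝒯 i).induce (↑P : Set (ℝ × ℝ))) ≃g ((𝒯 j).induce (↑P : Set (ℝ × ℝ)))) := by
  exact Sol.main hn hgp hcard hone
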